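/- Let Γ₄ be the 4-cycle on consecutive vertices x₁, x₂, x₃, x₄, with whiskers x₁y₁ and x₂y₂ attached, in the polynomial ring R = k[x₁, x₂, x₃, x₄, y₁, y₂]. Then the edge ideal (x₁x₂, x₂x₃, x₃x₄, x₄x₁, x₁y₁, x₂y₂) equals the radical of the ideal generated by the three elements x₁x₂, x₁x₄ + x₂x₃, and x₃x₄ + x₁y₁ + x₂y₂. -/

import Mathlib

open MvPolynomial

/-!
Squarefree monomial ideals over a reduced ring are radical: a monomial of `f` whose support contains
no generator survives when all variables outside that support are set to zero, whereas the ideal,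
and hence every element of its radical, is sent to zero. So it is enough to compare radicals.

For this, arrange the edges in the levels `x₁x₂`, then `x₁x₄, x₂x₃`, then `x₃x₄, x₁y₁, x₂y₂`. The
product of two distinct edges on one level is divisible by an edge on an earlier level. If the sum
of a level lies in a radical ideal that contains the earlier levels, multiplying this sum by one of
its terms `p` shows that `p ^ 2`, hence `p`, lies in the ideal (the Schmitt–Vogel lemma).
-/

section SchmittVogel

variable {A ι L : Type*} [CommRing A]

theorem mem_of_sum_mem_of_pairwise_mul_mem {I : Ideal A} (hI : I.IsRadical) {s : Finset ι}
    {p : ι → A} (hsum : ∑ i ∈ s, p i ∈ I)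
    (hmul : (s : Set ι).Pairwise fun i j ↦ p i * p j ∈ I) {i : ι} (hi : i ∈ s) : p i ∈ I := by
  classical
  have hrest : ∑ j ∈ s.erase i, p i * p j ∈ I := by
    refine I.sum_mem fun j hj ↦ ?_
    obtain ⟨hji, hj⟩ := Finset.mem_erase.mp hj
    exact hmul hi hj hji.symm
  have hsq : p i ^ 2 = p i * ∑ j ∈ s, p j - ∑ j ∈ s.erase i, p i * p j := by
    rw [← Finset.mul_sum, ← Finset.add_sum_erase s p hi]
    ring
  exact hI ⟨2, hsq ▸ I.sub_mem (I.mul_mem_left _ hsum) hrest⟩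

theorem radical_span_range_levelSum [Fintype ι] [Preorder L] [WellFoundedLT L] [DecidableEq L]
    (level : ι → L) (p : ι → A)
    (hmul : ∀ i j, i ≠ j → level i = level j →
      p i * p j ∈ (Ideal.span (p '' {m | level m < level i})).radical) :
    (Ideal.span (Set.range fun l ↦ ∑ i with level i = l, p i)).radical =
      (Ideal.span (Set.range p)).radical := by
  apply le_antisymm
  · refine Ideal.radical_mono (Ideal.span_le.mpr ?_)
    rintro _ ⟨l, rfl⟩
    exact Ideal.sum_mem _ fun i _ ↦ Ideal.subset_span ⟨i, rfl⟩
  · set J := Ideal.span (Set.range fun l ↦ ∑ i with level i = l, p i)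
    have hlevel (l : L) : ∀ i, level i = l → p i ∈ J.radical := by
      induction l using WellFoundedLT.induction with
      | ind l ih =>
        intro i hi
        refine mem_of_sum_mem_of_pairwise_mul_mem J.radical_isRadical
          (s := {j | level j = l}) (Ideal.le_radical (Ideal.subset_span ⟨l, rfl⟩)) ?_ (by simpa)
        intro a ha b hb hab
        simp only [Finset.coe_filter, Finset.mem_univ, true_and, Set.mem_ofPred_eq] at ha hb
        have hearlier : Ideal.span (p '' {m | level m < level a}) ≤ J.radical := by
          refine Ideal.span_le.mpr ?_
          rintro _ ⟨m, hm, rfl⟩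
          exact ih _ (ha ▸ hm) m rfl
        exact J.radical_isRadical.radical_le_iff.mpr hearlier (hmul a b hab (ha.trans hb.symm))
    refine J.radical_isRadical.radical_le_iff.mpr (Ideal.span_le.mpr ?_)
    rintro _ ⟨i, rfl⟩
    exact hlevel _ i rfl

end SchmittVogel

section SquarefreeMonomial

variable {σ ι : Type*} (R : Type*)

/-- The squarefree monomial `∏ i ∈ s, X i`, which is the generator of an edge ideal attached to the
edge `s` of a graph or hypergraph. -/
noncomputable def squarefreeMonomial [CommSemiring R] (s : Finset σ) : MvPolynomial σ R :=
  ∏ i ∈ s, X i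

theorem squarefreeMonomial_eq_monomial [CommSemiring R] (s : Finset σ) :
    squarefreeMonomial R s = monomial (∑ i ∈ s, Finsupp.single i 1) 1 :=
  (monomial_sum_one s _).symm

theorem sum_single_one_le_iff (s : Finset σ) (m : σ →₀ ℕ) :
    ∑ i ∈ s, Finsupp.single i 1 ≤ m ↔ s ⊆ m.support := by
  classical
  simp only [Finsupp.le_def, Finsupp.finsetSum_apply, Finsupp.single_apply, Finset.sum_ite_eq',
    Finset.subset_iff, Finsupp.mem_support_iff]
  refine forall_congr' fun i ↦ ?_
  split_ifs with hi <;> simp [hi, Nat.one_le_iff_ne_zero]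

theorem squarefreeMonomial_dvd_mul [CommSemiring R] [DecidableEq σ] {s t u : Finset σ}
    (h : u ⊆ s ∪ t) :
    squarefreeMonomial R u ∣ squarefreeMonomial R s * squarefreeMonomial R t := by
  unfold squarefreeMonomial
  rw [← Finset.prod_union_inter]
  exact (Finset.prod_dvd_prod_of_subset _ _ _ h).mul_right _

variable {R}

theorem mem_span_range_squarefreeMonomial [CommSemiring R] {e : ι → Finset σ}
    {f : MvPolynomial σ R} :
    f ∈ Ideal.span (Set.range fun a ↦ squarefreeMonomial R (e a)) ↔
      ∀ m ∈ f.support, ∃ a, e a ⊆ m.support := by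
  simp only [squarefreeMonomial_eq_monomial]
  rw [Set.range_comp' (fun m ↦ monomial m (1 : R)), mem_ideal_span_monomial_image]
  simp only [Set.exists_range_iff, sum_single_one_le_iff]

theorem killCompl_squarefreeMonomial_eq_zero [CommSemiring R] {τ : Type*} {g : τ → σ}
    (hg : g.Injective) {s : Finset σ} (hs : ¬ (s : Set σ) ⊆ Set.range g) :
    killCompl hg (squarefreeMonomial R s) = 0 := by
  obtain ⟨i, hi, hig⟩ := Set.not_subset.mp hs
  rw [squarefreeMonomial, map_prod]
  exact Finset.prod_eq_zero hi (by rw [killCompl, aeval_X, dif_neg hig])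

variable (R)

theorem isRadical_span_range_squarefreeMonomial [CommRing R] [IsReduced R] (e : ι → Finset σ) :
    (Ideal.span (Set.range fun a ↦ squarefreeMonomial R (e a))).IsRadical := by
  intro f hf
  refine mem_span_range_squarefreeMonomial.mpr fun m hm ↦ ?_
  by_contra! hedge
  let restrict : MvPolynomial σ R →ₐ[R] MvPolynomial (m.support : Set σ) R :=
    killCompl Subtype.val_injective
  have hspan : Ideal.span (Set.range fun a ↦ squarefreeMonomial R (e a)) ≤
      RingHom.ker restrict := by
    refine Ideal.span_le.mpr ?_
    rintro _ ⟨a, rfl⟩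
    exact killCompl_squarefreeMonomial_eq_zero _
      (by simpa only [Subtype.range_coe, Finset.coe_subset] using hedge a)
  have hker : (RingHom.ker restrict).IsRadical := Ideal.isRadical_bot.comap restrict
  have hzero : restrict f = 0 := hker.radical_le_iff.mpr hspan hf
  have hcoeff : coeff (m.comapDomain Subtype.val Subtype.val_injective.injOn) (restrict f) =
      coeff m f := by
    rw [coeff_killCompl,
      Finsupp.mapDomain_comapDomain _ Subtype.val_injective _ Subtype.range_coe.ge]
  exact mem_support_iff.mp hm (by rw [← hcoeff, hzero, coeff_zero])

theorem span_range_squarefreeMonomial_eq_radical [CommRing R] [IsReduced R]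
    [DecidableEq σ] [Fintype ι] {L : Type*} [Preorder L] [WellFoundedLT L] [DecidableEq L]
    (e : ι → Finset σ) (level : ι → L)
    (h : ∀ a b, a ≠ b → level a = level b → ∃ c, level c < level a ∧ e c ⊆ e a ∪ e b) :
    Ideal.span (Set.range fun a ↦ squarefreeMonomial R (e a)) =
      (Ideal.span (Set.range fun l ↦
        ∑ a with level a = l, squarefreeMonomial R (e a))).radical := by
  rw [radical_span_range_levelSum level, (isRadical_span_range_squarefreeMonomial R e).radical]
  intro a b hab hlevel
  obtain ⟨c, hc, hsub⟩ := h a b hab hlevel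
  exact Ideal.le_radical (Ideal.mem_of_dvd _ (squarefreeMonomial_dvd_mul R hsub)
    (Ideal.subset_span ⟨c, hc, rfl⟩))

end SquarefreeMonomial

section WhiskeredFourCycle

/-- The edges of the 4-cycle `x₁x₂x₃x₄` with whiskers `x₁y₁` and `x₂y₂`, where `x₁, …, x₄, y₁, y₂`
are `0, …, 5`. -/
def whiskeredFourCycleEdge : Fin 6 → Finset (Fin 6) :=
  ![{0, 1}, {1, 2}, {2, 3}, {3, 0}, {0, 4}, {1, 5}]

/-- The partition of the edges of the whiskered 4-cycle into levels, one for each generator in the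
Schmitt–Vogel lemma. -/
def whiskeredFourCycleLevel : Fin 6 → Fin 3 :=
  ![0, 1, 2, 1, 2, 2]

theorem filter_whiskeredFourCycleLevel (l : Fin 3) :
    ({a | whiskeredFourCycleLevel a = l} : Finset (Fin 6)) = ![{0}, {3, 1}, {2, 4, 5}] l := by
  decide +revert

theorem exists_whiskeredFourCycleEdge_subset_union (a b : Fin 6) (hab : a ≠ b)
    (hlevel : whiskeredFourCycleLevel a = whiskeredFourCycleLevel b) :
    ∃ c, whiskeredFourCycleLevel c < whiskeredFourCycleLevel a ∧
      whiskeredFourCycleEdge c ⊆ whiskeredFourCycleEdge a ∪ whiskeredFourCycleEdge b := by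
  decide +revert

variable (R : Type*) [CommSemiring R]

theorem squarefreeMonomial_whiskeredFourCycleEdge (a : Fin 6) :
    squarefreeMonomial R (whiskeredFourCycleEdge a) =
      ![X 0 * X 1, X 1 * X 2, X 2 * X 3, X 3 * X 0, X 0 * X 4, X 1 * X 5] a := by
  fin_cases a <;> exact Finset.prod_pair (by decide)

theorem range_squarefreeMonomial_whiskeredFourCycleEdge :
    Set.range (fun a ↦ squarefreeMonomial R (whiskeredFourCycleEdge a)) =
      {X 0 * X 1, X 1 * X 2, X 2 * X 3, X 3 * X 0, X 0 * X 4, X 1 * X 5} := by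
  simp only [squarefreeMonomial_whiskeredFourCycleEdge, Matrix.range_cons, Matrix.range_empty,
    Set.union_empty, Set.singleton_union]

theorem range_levelSum_whiskeredFourCycle :
    Set.range (fun l ↦ ∑ a with whiskeredFourCycleLevel a = l,
        squarefreeMonomial R (whiskeredFourCycleEdge a)) =
      {X 0 * X 1, X 0 * X 3 + X 1 * X 2, X 2 * X 3 + X 0 * X 4 + X 1 * X 5} := by
  have hsums : (fun l ↦ ∑ a with whiskeredFourCycleLevel a = l,
        squarefreeMonomial R (whiskeredFourCycleEdge a)) =
      ![X 0 * X 1, X 0 * X 3 + X 1 * X 2, X 2 * X 3 + X 0 * X 4 + X 1 * X 5] := by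
    funext l
    simp only [squarefreeMonomial_whiskeredFourCycleEdge, filter_whiskeredFourCycleLevel]
    fin_cases l <;> simp [mul_comm, add_assoc]
  simp only [hsums, Matrix.range_cons, Matrix.range_empty, Set.union_empty,
    Set.singleton_union]

end WhiskeredFourCycle

theorem stmt_9_general (R : Type*) [CommRing R] [IsReduced R] :
    Ideal.span ({X 0 * X 1, X 1 * X 2, X 2 * X 3, X 3 * X 0, X 0 * X 4, X 1 * X 5} :
        Set (MvPolynomial (Fin 6) R)) =
      (Ideal.span ({X 0 * X 1, X 0 * X 3 + X 1 * X 2, X 2 * X 3 + X 0 * X 4 + X 1 * X 5} :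
        Set (MvPolynomial (Fin 6) R))).radical := by
  rw [← range_squarefreeMonomial_whiskeredFourCycleEdge, ← range_levelSum_whiskeredFourCycle]
  exact span_range_squarefreeMonomial_eq_radical R _ _
    exists_whiskeredFourCycleEdge_subset_union

/-- For the 4-cycle `x₁x₂x₃x₄` with whiskers `x₁y₁` and `x₂y₂` (variables
`x₁,…,x₄,y₁,y₂` being `X 0,…,X 3, X 4, X 5`), the edge ideal equals the radical of the
ideal generated by `x₁x₂`, `x₁x₄ + x₂x₃` and `x₃x₄ + x₁y₁ + x₂y₂`. -/
theorem stmt_9 (k : Type*) [Field k] :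
    Ideal.span ({X 0 * X 1, X 1 * X 2, X 2 * X 3, X 3 * X 0, X 0 * X 4, X 1 * X 5} :
        Set (MvPolynomial (Fin 6) k)) =
      (Ideal.span ({X 0 * X 1, X 0 * X 3 + X 1 * X 2, X 2 * X 3 + X 0 * X 4 + X 1 * X 5} :
        Set (MvPolynomial (Fin 6) k))).radical :=
  stmt_9_general k
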